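/- Let a, b be coprime positive integers with a < b, and let r = a/b. Then the two-dimensional Lebesgue measure of the region R_r = {(p,q) ∈ T : 0 < S(p,q) < r} equals the integral ∫₀¹ b·(x^a − 1)²·x^{b−1} / (2·(x^{a+b} − 1)²) dx. -/

import Mathlib

/-!
Put `u = p / (1 - q)` and `s = 1 - q`. Exponentiating `S(p,q) < r` gives `(1 - p) u ^ r < q`, which
in these coordinates is the *linear* condition `s < (1 - u ^ r) / (1 - u ^ (1 + r))` on `s`. Taking
`r = 1` shows that `p < q` is the same as `S(p,q) < 1`, so for `r ≤ 1` the constraint `p ≤ q` of `T`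
is automatic. Since `dp dq = s du ds`, integrating out `s` leaves half the square of the bound on
`s`, integrated over `u ∈ (0,1)`; for `r = a / b` the substitution `u = x ^ b` makes the integrand
rational.
-/

open Real Set

/-- The parameter space `T = {(p,q) : 0 ≤ p ≤ q, p + q < 1} \ {(0,0)}`. -/
def bacT : Set (ℝ × ℝ) := {pq | 0 ≤ pq.1 ∧ pq.1 ≤ pq.2 ∧ pq.1 + pq.2 < 1 ∧ pq ≠ (0, 0)}

/-- The BAC-function `S`. -/
noncomputable def bacS (p q : ℝ) : ℝ :=
  if p = 0 then 0 else (Real.log (1 - p) - Real.log q) / (Real.log (1 - q) - Real.log p)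

/-- Transition probability of the n-fold binary asymmetric channel `BAC^n(p,q)`:
`bacPr p q x y = Pr(x|y)`. -/
noncomputable def bacPr (p q : ℝ) {n : ℕ} (x y : Fin n → Bool) : ℝ :=
  ∏ i, if x i then (if y i then 1 - q else p) else (if y i then q else 1 - p)

/-- The channels `BAC(p,q)` and `BAC(p',q')` are `n`-equivalent. -/
def nEquiv (n : ℕ) (p q p' q' : ℝ) : Prop :=
  ∀ x y z : Fin n → Bool,
    (bacPr p q x y ≤ bacPr p q x z ↔ bacPr p' q' x y ≤ bacPr p' q' x z)

/-- A point `(p,q) ∈ T` is `n`-stable if all nearby points of `T` are `n`-equivalent to it. -/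
def nStable (n : ℕ) (pq : ℝ × ℝ) : Prop :=
  ∃ ε > 0, ∀ pq' ∈ bacT, ‖pq' - pq‖ < ε → nEquiv n pq.1 pq.2 pq'.1 pq'.2

open MeasureTheory

section Integration

lemma setLIntegral_regionBetween {α : Type*} [MeasurableSpace α] {μ : Measure α} {f g : α → ℝ}
    {s : Set α} (hf : Measurable f) (hg : Measurable g) (hs : MeasurableSet s)
    {F : α × ℝ → ENNReal} (hF : Measurable F) :
    ∫⁻ z in regionBetween f g s, F z ∂μ.prod volume
      = ∫⁻ x in s, (∫⁻ y in Ioo (f x) (g x), F (x, y)) ∂μ := by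
  have hR : MeasurableSet (regionBetween f g s) := measurableSet_regionBetween hf hg hs
  rw [← lintegral_indicator hR, lintegral_prod _ (hF.indicator hR).aemeasurable,
    ← lintegral_indicator hs]
  congr with x
  by_cases hx : x ∈ s
  · rw [indicator_of_mem hx, ← lintegral_indicator measurableSet_Ioo]
    simp only [indicator, regionBetween, mem_ofPred_eq, hx, true_and]
  · simp [indicator, regionBetween, hx]

lemma setLIntegral_Ioo_ofReal_id {c : ℝ} (hc : 0 ≤ c) :
    ∫⁻ s in Ioo 0 c, ENNReal.ofReal s = ENNReal.ofReal (c ^ 2 / 2) := by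
  have hint : IntegrableOn (fun s : ℝ => s) (Ioo 0 c) :=
    continuous_id.integrableOn_Icc.mono_set Ioo_subset_Icc_self
  have hnonneg : 0 ≤ᵐ[volume.restrict (Ioo 0 c)] fun s : ℝ => s :=
    ae_restrict_of_forall_mem measurableSet_Ioo fun s hs => hs.1.le
  rw [← ofReal_integral_eq_lintegral_ofReal hint hnonneg, ← integral_Ioc_eq_integral_Ioo,
    ← intervalIntegral.integral_of_le hc, integral_id, zero_pow two_ne_zero, sub_zero]

lemma integral_comp_pow_mul {n : ℕ} (hn : n ≠ 0) (g : ℝ → ℝ) :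
    ∫ x in (0 : ℝ)..1, g (x ^ n) * (n * x ^ (n - 1)) = ∫ u in (0 : ℝ)..1, g u := by
  have h := intervalIntegral.integral_comp_mul_deriv_of_deriv_nonneg (a := 0) (b := 1) (g := g)
    (continuous_pow n).continuousOn (fun x _ => hasDerivAt_pow n x) fun x hx => by
      have hx0 : 0 < x := by simpa using hx.1
      positivity
  simpa [hn] using h

end Integration

section Level

variable {p q r : ℝ}

lemma bacS_pos (hp : 0 < p) (hq : 0 < q) (hpq : p + q < 1) : 0 < bacS p q := by
  rw [bacS, if_neg hp.ne']
  exact div_pos (sub_pos.2 (log_lt_log hq (by linarith)))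
    (sub_pos.2 (log_lt_log hp (by linarith)))

lemma bacS_lt_iff (hp : 0 < p) (hq : 0 < q) (hpq : p + q < 1) :
    bacS p q < r ↔ (1 - p) * (p / (1 - q)) ^ r < q := by
  have hp1 : 0 < 1 - p := by linarith
  have hq1 : 0 < 1 - q := by linarith
  have hden : 0 < log (1 - q) - log p := sub_pos.2 (log_lt_log hp (by linarith))
  have hu : 0 < p / (1 - q) := div_pos hp hq1
  have hlog : log ((1 - p) * (p / (1 - q)) ^ r) = log (1 - p) - r * (log (1 - q) - log p) := by
    rw [log_mul hp1.ne' (rpow_pos_of_pos hu r).ne', log_rpow hu, log_div hp.ne' hq1.ne']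
    ring
  rw [bacS, if_neg hp.ne', div_lt_iff₀ hden, ← log_lt_log_iff (by positivity) hq, hlog,
    sub_lt_comm]

lemma bacS_lt_one_iff (hp : 0 < p) (hq : 0 < q) (hpq : p + q < 1) : bacS p q < 1 ↔ p < q := by
  have hq1 : 0 < 1 - q := by linarith
  rw [bacS_lt_iff hp hq hpq, rpow_one, ← mul_div_assoc, div_lt_iff₀ hq1]
  constructor <;> intro h <;> nlinarith

lemma mem_bacT_and_bacS_mem_Ioo_iff (hr : r ≤ 1) :
    ((p, q) ∈ bacT ∧ 0 < bacS p q ∧ bacS p q < r) ↔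
      0 < p ∧ 0 < q ∧ p + q < 1 ∧ bacS p q < r := by
  constructor
  · rintro ⟨⟨hp, hpq, hsum, -⟩, hpos, hlt⟩
    have hp0 : p ≠ 0 := by
      rintro rfl
      simp [bacS] at hpos
    have hp' : 0 < p := hp.lt_of_ne' hp0
    exact ⟨hp', hp'.trans_le hpq, hsum, hlt⟩
  · rintro ⟨hp, hq, hsum, hlt⟩
    have hpq : p < q := (bacS_lt_one_iff hp hq hsum).1 (hlt.trans_le hr)
    exact ⟨⟨hp.le, hpq.le, hsum, fun h => hp.ne' (congrArg Prod.fst h)⟩,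
      bacS_pos hp hq hsum, hlt⟩

end Level

section Threshold

variable {r u : ℝ}

/-- The upper bound that `S(p,q) < r` puts on `1 - q` when the ratio `u = p / (1 - q)` is fixed. -/
noncomputable def bacThreshold (r u : ℝ) : ℝ := (1 - u ^ r) / (1 - u ^ (1 + r))

lemma measurable_bacThreshold (r : ℝ) : Measurable (bacThreshold r) := by
  unfold bacThreshold
  fun_prop

lemma bacThreshold_nonneg (hr : 0 ≤ r) (hu : u ∈ Ioo 0 1) : 0 ≤ bacThreshold r u :=
  div_nonneg (sub_nonneg.2 (rpow_le_one hu.1.le hu.2.le hr))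
    (sub_nonneg.2 (rpow_le_one hu.1.le hu.2.le (by linarith)))

lemma bacThreshold_le_one (hr : 0 ≤ r) (hu : u ∈ Ioo 0 1) : bacThreshold r u ≤ 1 := by
  have hden : u ^ (1 + r) < 1 := rpow_lt_one hu.1.le hu.2 (by linarith)
  have hle : u ^ (1 + r) ≤ u ^ r := rpow_le_rpow_of_exponent_ge hu.1 hu.2.le (by linarith)
  rw [bacThreshold, div_le_one (sub_pos.2 hden)]
  linarith

lemma integrableOn_bacThreshold_sq_div_two (hr : 0 ≤ r) :
    IntegrableOn (fun u => bacThreshold r u ^ 2 / 2) (Ioo 0 1) := by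
  refine Measure.integrableOn_of_bounded (M := 1) (by simp)
    (((measurable_bacThreshold r).pow_const 2).div_const 2).aestronglyMeasurable
    (ae_restrict_of_forall_mem measurableSet_Ioo fun u hu => ?_)
  have hsq : bacThreshold r u ^ 2 ≤ 1 :=
    pow_le_one₀ (bacThreshold_nonneg hr hu) (bacThreshold_le_one hr hu)
  rw [norm_of_nonneg (by positivity)]
  linarith

end Threshold

section Chart

variable {r : ℝ}

/-- The inverse of the coordinate change `(p, q) ↦ (u, s) = (p / (1 - q), 1 - q)`. -/
def bacChart (z : ℝ × ℝ) : ℝ × ℝ := (z.2 * z.1, 1 - z.2)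

lemma injOn_bacChart : InjOn bacChart {z | 0 < z.2} := by
  rintro ⟨u, s⟩ hs ⟨v, t⟩ - h
  obtain ⟨hp, hq⟩ := Prod.mk.inj h
  obtain rfl : s = t := sub_right_injective hq
  exact Prod.ext (mul_left_cancel₀ (ne_of_gt hs) hp) rfl

/-- The Fréchet derivative of `bacChart` at `z`, given by its Jacobian matrix so that its
determinant can be read off. -/
noncomputable def bacChartDeriv (z : ℝ × ℝ) : ℝ × ℝ →L[ℝ] ℝ × ℝ :=
  (Matrix.toLin (.finTwoProd ℝ) (.finTwoProd ℝ) !![z.2, z.1; 0, -1]).toContinuousLinearMap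

lemma det_bacChartDeriv (z : ℝ × ℝ) : (bacChartDeriv z).det = -z.2 := by
  simp [bacChartDeriv, ContinuousLinearMap.det, Matrix.det_fin_two]

lemma hasFDerivAt_bacChart (z : ℝ × ℝ) : HasFDerivAt bacChart (bacChartDeriv z) z := by
  rw [bacChartDeriv, Matrix.toLin_finTwoProd_toContinuousLinearMap]
  have hu : HasFDerivAt Prod.fst (ContinuousLinearMap.fst ℝ ℝ ℝ) z := hasFDerivAt_fst
  have hs : HasFDerivAt Prod.snd (ContinuousLinearMap.snd ℝ ℝ ℝ) z := hasFDerivAt_snd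
  refine ((hs.mul hu).prodMk (hs.const_sub 1)).congr_fderiv ?_
  ext <;> simp

lemma volume_bacChart_image {D : Set (ℝ × ℝ)} (hD : MeasurableSet D) (hpos : ∀ z ∈ D, 0 < z.2) :
    volume (bacChart '' D) = ∫⁻ z in D, ENNReal.ofReal z.2 := by
  rw [← lintegral_abs_det_fderiv_eq_addHaar_image volume hD
    (fun z _ => (hasFDerivAt_bacChart z).hasFDerivWithinAt) (injOn_bacChart.mono hpos)]
  refine setLIntegral_congr_fun hD fun z hz => ?_
  simp only [det_bacChartDeriv, abs_neg, abs_of_pos (hpos z hz)]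

lemma volume_bacChart_image_regionBetween {f : ℝ → ℝ} {A : Set ℝ} (hf : Measurable f)
    (hA : MeasurableSet A) (hf0 : ∀ u ∈ A, 0 ≤ f u) :
    volume (bacChart '' regionBetween 0 f A) = ∫⁻ u in A, ENNReal.ofReal (f u ^ 2 / 2) := by
  rw [volume_bacChart_image (measurableSet_regionBetween measurable_zero hf hA)
      fun z hz => hz.2.1,
    Measure.volume_eq_prod, setLIntegral_regionBetween measurable_zero hf hA (by fun_prop)]
  exact setLIntegral_congr_fun hA fun u hu => setLIntegral_Ioo_ofReal_id (hf0 u hu)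

lemma bacS_bacChart_lt_iff {u s : ℝ} (hr : 0 ≤ r) (hu : u ∈ Ioo 0 1) (hs : s ∈ Ioo 0 1) :
    bacS (s * u) (1 - s) < r ↔ s < bacThreshold r u := by
  have hden : u ^ (1 + r) < 1 := rpow_lt_one hu.1.le hu.2 (by linarith)
  have hsu : s * u < s := mul_lt_of_lt_one_right hs.1 hu.2
  rw [bacS_lt_iff (mul_pos hs.1 hu.1) (sub_pos.2 hs.2) (by linarith), sub_sub_cancel,
    mul_div_cancel_left₀ u hs.1.ne', bacThreshold, lt_div_iff₀ (sub_pos.2 hden),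
    rpow_add hu.1, rpow_one]
  constructor <;> intro h <;> linarith

lemma setOf_bacS_mem_Ioo_eq_image (hr0 : 0 ≤ r) (hr1 : r ≤ 1) :
    {pq : ℝ × ℝ | pq ∈ bacT ∧ 0 < bacS pq.1 pq.2 ∧ bacS pq.1 pq.2 < r}
      = bacChart '' regionBetween 0 (bacThreshold r) (Ioo 0 1) := by
  ext ⟨p, q⟩
  refine (mem_bacT_and_bacS_mem_Ioo_iff hr1).trans ⟨?_, ?_⟩
  · rintro ⟨hp, hq, hsum, hlt⟩
    have hs : 1 - q ∈ Ioo (0 : ℝ) 1 := ⟨by linarith, by linarith⟩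
    have hu : p / (1 - q) ∈ Ioo (0 : ℝ) 1 :=
      ⟨div_pos hp hs.1, (div_lt_one hs.1).2 (by linarith)⟩
    have hpu : (1 - q) * (p / (1 - q)) = p := mul_div_cancel₀ p hs.1.ne'
    have hlt' : 1 - q < bacThreshold r (p / (1 - q)) := by
      rwa [← bacS_bacChart_lt_iff hr0 hu hs, hpu, sub_sub_cancel]
    exact ⟨(p / (1 - q), 1 - q), ⟨hu, hs.1, hlt'⟩, Prod.ext hpu (sub_sub_cancel 1 q)⟩
  · rintro ⟨⟨u, s⟩, ⟨hu, hs0, hlt⟩, h⟩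
    obtain ⟨rfl, rfl⟩ := Prod.mk.inj h
    have hs : s ∈ Ioo (0 : ℝ) 1 := ⟨hs0, hlt.trans_le (bacThreshold_le_one hr0 hu)⟩
    have hsu : s * u < s := mul_lt_of_lt_one_right hs.1 hu.2
    exact ⟨mul_pos hs.1 hu.1, sub_pos.2 hs.2, by linarith, (bacS_bacChart_lt_iff hr0 hu hs).2 hlt⟩

end Chart

lemma integral_rpow_div_eq_integral_pow (a : ℕ) {b : ℕ} (hb : b ≠ 0) :
    ∫ u in (0 : ℝ)..1, ((1 - u ^ ((a : ℝ) / b)) / (1 - u ^ (1 + (a : ℝ) / b))) ^ 2 / 2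
      = ∫ x in (0 : ℝ)..1,
          (b : ℝ) * (x ^ a - 1) ^ 2 * x ^ (b - 1) / (2 * (x ^ (a + b) - 1) ^ 2) := by
  rw [← integral_comp_pow_mul hb]
  refine intervalIntegral.integral_congr fun x hx => ?_
  have hx0 : 0 ≤ x := by simpa using hx.1
  have hb' : (b : ℝ) ≠ 0 := Nat.cast_ne_zero.2 hb
  have hnum : (x ^ b) ^ ((a : ℝ) / b) = x ^ a := by
    rw [← rpow_natCast_mul hx0, mul_div_cancel₀ _ hb', rpow_natCast]
  have hden : (x ^ b) ^ (1 + (a : ℝ) / b) = x ^ (a + b) := by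
    rw [← rpow_natCast_mul hx0, mul_add, mul_one, mul_div_cancel₀ _ hb', add_comm,
      ← Nat.cast_add, rpow_natCast]
  simp only [hnum, hden]
  rw [div_pow, sub_sq_comm 1, sub_sq_comm 1, div_div, div_mul_eq_mul_div, mul_comm _ (2 : ℝ)]
  ring

theorem stmt16_general (r : ℝ) (hr0 : 0 ≤ r) (hr1 : r ≤ 1) :
    volume {pq : ℝ × ℝ | pq ∈ bacT ∧ 0 < bacS pq.1 pq.2 ∧ bacS pq.1 pq.2 < r}
      = ENNReal.ofReal
          (∫ u in (0 : ℝ)..1, ((1 - u ^ r) / (1 - u ^ (1 + r))) ^ 2 / 2) := by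
  change _ = ENNReal.ofReal (∫ u in (0 : ℝ)..1, bacThreshold r u ^ 2 / 2)
  rw [setOf_bacS_mem_Ioo_eq_image hr0 hr1,
    volume_bacChart_image_regionBetween (measurable_bacThreshold r) measurableSet_Ioo
      fun _ => bacThreshold_nonneg hr0,
    intervalIntegral.integral_of_le zero_le_one, integral_Ioc_eq_integral_Ioo,
    ofReal_integral_eq_lintegral_ofReal (integrableOn_bacThreshold_sq_div_two hr0)
      (ae_of_all _ fun _ => by positivity)]

theorem stmt16 (a b : ℕ) (ha : 0 < a) (hab : a < b) (hcop : Nat.Coprime a b) :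
    MeasureTheory.volume
        {pq : ℝ × ℝ | pq ∈ bacT ∧ 0 < bacS pq.1 pq.2 ∧ bacS pq.1 pq.2 < (a : ℝ) / (b : ℝ)}
      = ENNReal.ofReal
          (∫ x in (0 : ℝ)..1,
            (b : ℝ) * (x ^ a - 1) ^ 2 * x ^ (b - 1) / (2 * (x ^ (a + b) - 1) ^ 2)) := by
  rw [stmt16_general (a / b) (by positivity) (div_le_one_of_le₀ (mod_cast hab.le) b.cast_nonneg),
    integral_rpow_div_eq_integral_pow a (ha.trans hab).ne']
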